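/- Franke embedding for sequence spaces with all exponents variable: Let n ∈ ℕ, let p₀, p₁, q ∈ P^{log}(ℝⁿ) with sup p₁ < ∞, and let s₀, s₁ : ℝⁿ → ℝ be locally log-Hölder continuous. Assume inf_{x∈ℝⁿ}(s₀(x) − s₁(x)) > 0 and s₀(x) − n/p₀(x) = s₁(x) − n/p₁(x) for all x ∈ ℝⁿ. Then b^{s₀(·)}_{p₀(·),p₁(·)}(ℝⁿ) ↪ f^{s₁(·)}_{p₁(·),q(·)}(ℝⁿ): there exists C > 0 such that for every complex-valued sequence γ = (γ_{j,m})_{j∈ℕ₀,m∈ℤⁿ}, ‖γ | f^{s₁(·)}_{p₁(·),q(·)}(ℝⁿ)‖ ≤ C ‖γ | b^{s₀(·)}_{p₀(·),p₁(·)}(ℝⁿ)‖. -/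

import Mathlib

/-!
The hypotheses force `1/p₀ - 1/p₁ = (s₀ - s₁)/n ≥ δ/n > 0`, so `p₀` is finite and the gap between
`p₀` and `p₁` is uniform. As `ℓ_r ⊂ ℓ_{q(x)}` for `r ≤ inf q`, it suffices to treat a constant
inner exponent `r`.

Normalise the Besov quasinorm to be at most one. The mixed modular then provides weights `λ_j` with
`∑ λ_j` bounded and `∫ φ_j^{p₀} ≤ 1` for `φ_j = 2^{j s₀} |γ_{j,·}| λ_j^{-1/p₁}`; enlarging them
(`slowMajorant`, `exists_weights`) one may assume `λ_{j+1} ≥ (3/4) λ_j` and `λ_j ≥ (3/4)^j`.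
Put `g_j = 2^{j s₁} |γ_{j,·}|` and `w_j = λ_j 2^{jn}`, which grows at least like `(3/2)^j`.

* Since `γ_{j,·}` is constant on the cubes of generation `j`, where the log-Hölder functions `s₁` and
  `1/p₁` oscillate by `O(1/j)`, the integral bound gives `g_j(x) ≤ K w_j^{1/p₁(x)}`
  (`exists_uniform_bound`).
* By the Sobolev relation `λ_j φ_j^{p₀} = g_j^{p₀} w_j^{1 - p₀/p₁}`. Hence, with
  `T(x) = ∑_j λ_j φ_j(x)^{p₀(x)}`, also `g_j ≤ T^{1/p₀} w_j^{-(1/p₀ - 1/p₁)}`.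

At fixed `x` the first bound increases geometrically in `j`, the second one decreases
geometrically, and they cross where `w_j = T`, with common value about `T^{1/p₁}`. So
`(∑_j g_j^r)^{p₁/r} ≤ C T` pointwise (`sum_rpow_le`, `tsum_rpow_pointwise`), and integration gives
`∫ (∑_j g_j^r)^{p₁/r} ≤ C ∑_j λ_j ∫ φ_j^{p₀} ≤ C'` (`lintegral_tsum_rpow_le`).
-/

open MeasureTheory ENNReal NNReal

noncomputable section

/-- The dyadic cube `Q_{j,m}` in `ℝⁿ`: centered at `2^{-j} m`, with sides parallel to the
coordinate axes and side length `2^{-j}`. -/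
def Qcube (n : ℕ) (j : ℕ) (m : Fin n → ℤ) : Set (EuclideanSpace ℝ (Fin n)) :=
  {x | ∀ i, (2 : ℝ) ^ (-(j : ℝ)) * ((m i : ℝ) - 1 / 2) ≤ x i ∧
        x i < (2 : ℝ) ^ (-(j : ℝ)) * ((m i : ℝ) + 1 / 2)}

/-- A function `g : ℝⁿ → ℝ` is locally log-Hölder continuous if there exists `c > 0` such
that `|g(x) − g(y)| ≤ c / log(e + 1/|x−y|)` for all `x, y ∈ ℝⁿ` (Euclidean distance). -/
def LocLogHolder {n : ℕ} (g : EuclideanSpace ℝ (Fin n) → ℝ) : Prop :=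
  ∃ c : ℝ, 0 < c ∧ ∀ x y, |g x - g y| ≤ c / Real.log (Real.exp 1 + 1 / dist x y)

/-- A function `g : ℝⁿ → ℝ` is globally log-Hölder continuous if it is locally log-Hölder
continuous and in addition `|g(x) − g_∞| ≤ c / log(e + |x|)` for some `g_∞` and all `x`. -/
def GlobLogHolder {n : ℕ} (g : EuclideanSpace ℝ (Fin n) → ℝ) : Prop :=
  LocLogHolder g ∧ ∃ c : ℝ, 0 < c ∧ ∃ g₀ : ℝ, ∀ x, |g x - g₀| ≤ c / Real.log (Real.exp 1 + ‖x‖)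

/-- The class `P^{log}(ℝⁿ)` of measurable exponents `p : ℝⁿ → (0,∞]` with `inf p > 0` and
`1/p` globally log-Hölder continuous. -/
def PLog {n : ℕ} (p : EuclideanSpace ℝ (Fin n) → ℝ≥0∞) : Prop :=
  Measurable p ∧ (∃ c : ℝ≥0, 0 < c ∧ ∀ x, (c : ℝ≥0∞) ≤ p x) ∧
    GlobLogHolder fun x => ((p x)⁻¹).toReal

/-- The modular `ρ_{p(·)}(g) = ∫_{{p<∞}} g(x)^{p(x)} dx + ess sup_{{p=∞}} g` of a
non-negative function `g`, for a variable exponent `p : ℝⁿ → (0,∞]`. -/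
def varModular {n : ℕ} (p : EuclideanSpace ℝ (Fin n) → ℝ≥0∞)
    (g : EuclideanSpace ℝ (Fin n) → ℝ≥0∞) : ℝ≥0∞ :=
  (∫⁻ x in {x | p x ≠ ∞}, g x ^ (p x).toReal) + essSup g (volume.restrict {x | p x = ∞})

/-- The Luxemburg (quasi)norm `‖g | L_{p(·)}(ℝⁿ)‖ = inf {λ > 0 : ρ_{p(·)}(g/λ) ≤ 1}`. -/
def luxNorm {n : ℕ} (p : EuclideanSpace ℝ (Fin n) → ℝ≥0∞)
    (g : EuclideanSpace ℝ (Fin n) → ℝ≥0∞) : ℝ≥0∞ :=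
  sInf {lam : ℝ≥0∞ | 0 < lam ∧ varModular p (fun x => g x / lam) ≤ 1}

/-- The mixed modular
`ρ_{ℓ_{q(·)}(L_{p(·)})}((f_ν)) = Σ_ν inf {λ_ν > 0 : ρ_{p(·)}(f_ν / λ_ν^{1/q(·)}) ≤ 1}`,
with the convention `λ^{1/∞} = 1`. -/
def mixedModular {n : ℕ} (q p : EuclideanSpace ℝ (Fin n) → ℝ≥0∞)
    (f : ℕ → EuclideanSpace ℝ (Fin n) → ℝ≥0∞) : ℝ≥0∞ :=
  ∑' ν : ℕ, sInf {lam : ℝ≥0∞ | 0 < lam ∧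
    varModular p (fun x => f ν x / lam ^ ((q x)⁻¹).toReal) ≤ 1}

/-- The `ℓ_{q(·)}(L_{p(·)})` (quasi)norm
`‖(f_ν)‖ = inf {μ > 0 : ρ_{ℓ_{q(·)}(L_{p(·)})}((f_ν/μ)) ≤ 1}`. -/
def ellqLpNorm {n : ℕ} (q p : EuclideanSpace ℝ (Fin n) → ℝ≥0∞)
    (f : ℕ → EuclideanSpace ℝ (Fin n) → ℝ≥0∞) : ℝ≥0∞ :=
  sInf {mu : ℝ≥0∞ | 0 < mu ∧ mixedModular q p (fun ν x => f ν x / mu) ≤ 1}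

/-- The `L_{p(·)}(ℓ_{q(·)})` (quasi)norm: first the pointwise `ℓ_{q(x)}` norm (a supremum
where `q(x) = ∞`), then the `L_{p(·)}` Luxemburg norm. -/
def lpEllqNorm {n : ℕ} (p q : EuclideanSpace ℝ (Fin n) → ℝ≥0∞)
    (f : ℕ → EuclideanSpace ℝ (Fin n) → ℝ≥0∞) : ℝ≥0∞ :=
  luxNorm p fun x =>
    if q x = ∞ then ⨆ ν, f ν x
    else (∑' ν : ℕ, f ν x ^ (q x).toReal) ^ ((q x).toReal)⁻¹

/-- The building blocks `x ↦ Σ_m |γ_{j,m}| 2^{j s(x)} χ_{j,m}(x)` of the sequence-space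
quasinorms. -/
def seqBlocks {n : ℕ} (s : EuclideanSpace ℝ (Fin n) → ℝ) (γ : ℕ → (Fin n → ℤ) → ℂ)
    (j : ℕ) (x : EuclideanSpace ℝ (Fin n)) : ℝ≥0∞ :=
  (2 : ℝ≥0∞) ^ ((j : ℝ) * s x) *
    ∑' m : Fin n → ℤ, (‖γ j m‖₊ : ℝ≥0∞) * (Qcube n j m).indicator (fun _ => (1 : ℝ≥0∞)) x

/-- The Besov sequence quasinorm `‖γ | b^{s(·)}_{p(·),q(·)}(ℝⁿ)‖`. -/
def bVarNorm (n : ℕ) (s : EuclideanSpace ℝ (Fin n) → ℝ)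
    (p q : EuclideanSpace ℝ (Fin n) → ℝ≥0∞) (γ : ℕ → (Fin n → ℤ) → ℂ) : ℝ≥0∞ :=
  ellqLpNorm q p (seqBlocks s γ)

/-- The Triebel–Lizorkin sequence quasinorm `‖γ | f^{s(·)}_{p(·),q(·)}(ℝⁿ)‖`. -/
def fVarNorm (n : ℕ) (s : EuclideanSpace ℝ (Fin n) → ℝ)
    (p q : EuclideanSpace ℝ (Fin n) → ℝ≥0∞) (γ : ℕ → (Fin n → ℤ) → ℂ) : ℝ≥0∞ :=
  lpEllqNorm p q (seqBlocks s γ)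

/-! ### Log-Hölder continuity on dyadic cubes -/

lemma LocLogHolder.continuous {n : ℕ} {g : EuclideanSpace ℝ (Fin n) → ℝ}
    (hg : LocLogHolder g) : Continuous g := by
  obtain ⟨c, hc, h⟩ := hg
  rw [Metric.continuous_iff]
  intro x ε hε
  refine ⟨Real.exp (-(c / ε)), Real.exp_pos _, fun y hy => ?_⟩
  rcases eq_or_ne y x with rfl | hne
  · simpa using hε
  have hd : 0 < dist y x := dist_pos.2 hne
  have h1 : Real.exp (c / ε) < 1 / dist y x := by
    rw [lt_div_iff₀ hd]
    calc Real.exp (c / ε) * dist y x < Real.exp (c / ε) * Real.exp (-(c / ε)) :=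
          mul_lt_mul_of_pos_left hy (Real.exp_pos _)
      _ = 1 := by rw [← Real.exp_add]; simp
  have h2 : c / ε < Real.log (Real.exp 1 + 1 / dist y x) := by
    rw [Real.lt_log_iff_exp_lt (by positivity)]
    linarith [Real.exp_pos 1]
  have h3 : 0 < Real.log (Real.exp 1 + 1 / dist y x) := lt_trans (by positivity) h2
  rw [Real.dist_eq]
  refine (h y x).trans_lt ?_
  rw [div_lt_iff₀ hε] at h2
  rw [div_lt_iff₀ h3]
  linarith

lemma dist_le_of_mem_Qcube {n j : ℕ} {m : Fin n → ℤ} {x y : EuclideanSpace ℝ (Fin n)}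
    (hx : x ∈ Qcube n j m) (hy : y ∈ Qcube n j m) :
    dist x y ≤ n * (2 : ℝ) ^ (-(j : ℝ)) := by
  have hpos : (0 : ℝ) < (2 : ℝ) ^ (-(j : ℝ)) := by positivity
  rw [EuclideanSpace.dist_eq]
  apply Real.sqrt_le_iff.2
  refine ⟨by positivity, ?_⟩
  calc ∑ i, dist (x i) (y i) ^ 2 ≤ ∑ _i : Fin n, ((2 : ℝ) ^ (-(j : ℝ))) ^ 2 := by
        refine Finset.sum_le_sum fun i _ => ?_
        have h1 := hx i
        have h2 := hy i
        refine pow_le_pow_left₀ dist_nonneg ?_ 2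
        rw [Real.dist_eq, abs_le]
        constructor <;> linarith [h1.1, h1.2, h2.1, h2.2]
    _ = n * ((2 : ℝ) ^ (-(j : ℝ))) ^ 2 := by simp
    _ ≤ (n * (2 : ℝ) ^ (-(j : ℝ))) ^ 2 := by
        rw [mul_pow]
        refine mul_le_mul_of_nonneg_right ?_ (by positivity)
        exact_mod_cast Nat.le_self_pow (by norm_num) n

/-- On a cube of side length `2^{-j}` a locally log-Hölder function oscillates by `O(1/(j+1))`,
so that `2^{j g}` is constant on such cubes up to a uniform factor. -/
lemma LocLogHolder.osc_le {n : ℕ} (hn : 0 < n) {g : EuclideanSpace ℝ (Fin n) → ℝ}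
    (hg : LocLogHolder g) :
    ∃ D : ℝ, 0 ≤ D ∧ ∀ (j : ℕ) (m : Fin n → ℤ) (x y : EuclideanSpace ℝ (Fin n)),
      x ∈ Qcube n j m → y ∈ Qcube n j m → ((j : ℝ) + 1) * |g x - g y| ≤ D := by
  obtain ⟨c, hc, h⟩ := hg
  have hn1 : (1 : ℝ) ≤ n := by exact_mod_cast hn
  have hlogn : 0 ≤ Real.log n := Real.log_nonneg hn1
  have hl2 : 0 < Real.log 2 := Real.log_pos (by norm_num)
  refine ⟨c * ((1 + Real.log n) / Real.log 2 + 1), by positivity, fun j m x y hx hy => ?_⟩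
  rcases eq_or_ne x y with rfl | hne
  · simp only [sub_self, abs_zero, mul_zero]; positivity
  have hd : 0 < dist x y := dist_pos.2 hne
  set L := Real.log (Real.exp 1 + 1 / dist x y) with hL
  have hL1 : 1 ≤ L := by
    rw [hL, Real.le_log_iff_exp_le (by positivity)]
    have : 0 < 1 / dist x y := by positivity
    linarith
  have hL2 : j * Real.log 2 - Real.log n ≤ L := by
    have h1 : (j : ℝ) * Real.log 2 - Real.log n = Real.log ((2 : ℝ) ^ (j : ℝ) / n) := by
      rw [Real.log_div (by positivity) (by positivity), Real.log_rpow (by norm_num)]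
    rw [h1, hL]
    refine Real.log_le_log (by positivity) ?_
    have h2 : (2 : ℝ) ^ (j : ℝ) / n ≤ 1 / dist x y := by
      rw [div_le_div_iff₀ (by positivity) hd]
      calc (2 : ℝ) ^ (j : ℝ) * dist x y
          ≤ (2 : ℝ) ^ (j : ℝ) * (n * (2 : ℝ) ^ (-(j : ℝ))) :=
            mul_le_mul_of_nonneg_left (dist_le_of_mem_Qcube hx hy) (by positivity)
        _ = 1 * n := by
            rw [Real.rpow_neg (by norm_num)]
            field_simp
    linarith [Real.exp_pos 1]
  have hj : (j : ℝ) + 1 ≤ L * ((1 + Real.log n) / Real.log 2 + 1) := by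
    have h1 : (j : ℝ) ≤ L * (1 + Real.log n) / Real.log 2 := by
      rw [le_div_iff₀ hl2]
      nlinarith
    rw [mul_add, mul_one, ← mul_div_assoc]
    linarith
  have h3 := h x y
  rw [← hL, le_div_iff₀ (by linarith)] at h3
  calc ((j : ℝ) + 1) * |g x - g y|
      ≤ L * ((1 + Real.log n) / Real.log 2 + 1) * |g x - g y| :=
        mul_le_mul_of_nonneg_right hj (abs_nonneg _)
    _ = (|g x - g y| * L) * ((1 + Real.log n) / Real.log 2 + 1) := by ring
    _ ≤ c * ((1 + Real.log n) / Real.log 2 + 1) :=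
        mul_le_mul_of_nonneg_right h3 (by positivity)

/-! ### The dyadic grid -/

/-- The index `m` of the unique cube `Q_{j,m}` of generation `j` containing `x`. -/
def cubeIdx (n j : ℕ) (x : EuclideanSpace ℝ (Fin n)) : Fin n → ℤ :=
  fun i => ⌊(2 : ℝ) ^ (j : ℝ) * x i + 1 / 2⌋

lemma mem_Qcube_iff {n j : ℕ} {m : Fin n → ℤ} {x : EuclideanSpace ℝ (Fin n)} :
    x ∈ Qcube n j m ↔ cubeIdx n j x = m := by
  have hp : (0 : ℝ) < (2 : ℝ) ^ (j : ℝ) := by positivity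
  rw [funext_iff]
  refine forall_congr' fun i => ?_
  rw [cubeIdx, Int.floor_eq_iff, Real.rpow_neg (by norm_num), inv_mul_le_iff₀ hp,
    lt_inv_mul_iff₀ hp]
  constructor <;> rintro ⟨h1, h2⟩ <;> constructor <;> linarith

lemma measurable_cubeIdx (n j : ℕ) : Measurable (cubeIdx n j) := by
  unfold cubeIdx
  refine measurable_pi_iff.2 fun i => ?_
  refine Int.measurable_floor.comp ?_
  have : Continuous fun x : EuclideanSpace ℝ (Fin n) => x i := by fun_prop
  exact (this.measurable.const_mul _).add_const _

lemma measurableSet_Qcube (n j : ℕ) (m : Fin n → ℤ) : MeasurableSet (Qcube n j m) := by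
  have : Qcube n j m = cubeIdx n j ⁻¹' {m} := by ext z; simp [mem_Qcube_iff]
  rw [this]
  exact measurable_cubeIdx n j (measurableSet_singleton m)

lemma volume_Qcube (n j : ℕ) (m : Fin n → ℤ) :
    volume (Qcube n j m) = ENNReal.ofReal ((2 : ℝ) ^ (-((j : ℝ) * n))) := by
  have h1 : Qcube n j m = (MeasurableEquiv.toLp 2 (Fin n → ℝ)).symm ⁻¹'
      (Set.univ.pi fun i => Set.Ico ((2 : ℝ) ^ (-(j : ℝ)) * ((m i : ℝ) - 1 / 2))
        ((2 : ℝ) ^ (-(j : ℝ)) * ((m i : ℝ) + 1 / 2))) := by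
    ext x
    simp [Qcube, Set.mem_pi]
  rw [h1, (EuclideanSpace.volume_preserving_symm_measurableEquiv_toLp (Fin n)).measure_preimage
    (MeasurableSet.univ_pi fun i => measurableSet_Ico).nullMeasurableSet, volume_pi_pi]
  simp only [Real.volume_Ico]
  have h2 : ∀ i, (2 : ℝ) ^ (-(j : ℝ)) * ((m i : ℝ) + 1 / 2)
      - (2 : ℝ) ^ (-(j : ℝ)) * ((m i : ℝ) - 1 / 2) = (2 : ℝ) ^ (-(j : ℝ)) := fun i => by ring
  simp only [h2, Finset.prod_const, Finset.card_univ, Fintype.card_fin]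
  rw [← ENNReal.ofReal_pow (by positivity), ← Real.rpow_mul_natCast (by norm_num), neg_mul]

lemma seqBlocks_eq {n : ℕ} (s : EuclideanSpace ℝ (Fin n) → ℝ) (γ : ℕ → (Fin n → ℤ) → ℂ)
    (j : ℕ) (x : EuclideanSpace ℝ (Fin n)) :
    seqBlocks s γ j x
      = ENNReal.ofReal ((2 : ℝ) ^ ((j : ℝ) * s x) * ‖γ j (cubeIdx n j x)‖) := by
  unfold seqBlocks
  rw [tsum_eq_single (cubeIdx n j x), ENNReal.ofReal_mul (by positivity),
    ← ENNReal.ofReal_rpow_of_pos (by norm_num)]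
  · rw [Set.indicator_of_mem (mem_Qcube_iff.2 rfl)]
    simp [enorm_eq_nnnorm]
  · intro m hm
    rw [Set.indicator_of_notMem, mul_zero]
    rw [mem_Qcube_iff]
    exact fun h => hm h.symm

/-! ### Two-sided geometric sums -/

/-- If `v` grows at least geometrically, `∑ min(v_k, 1/v_k)` is bounded independently of `v`:
each term is dominated by an increment of the bounded monotone function `u ↦ u / (1 + u)`
along `v`, and these increments telescope. -/
lemma sum_min_inv_le {ρ : ℝ} (hρ : 1 < ρ) {v : ℕ → ℝ} (hv : ∀ k, 0 < v k)
    (hgrow : ∀ k, ρ * v k ≤ v (k + 1)) (N : ℕ) :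
    ∑ k ∈ Finset.range N, min (v k) (v k)⁻¹ ≤ 2 * (ρ + 1) / (ρ - 1) := by
  have hρ' : 0 < ρ - 1 := by linarith
  have hterm : ∀ k, min (v k) (v k)⁻¹ ≤
      2 * (ρ + 1) / (ρ - 1) * (v (k + 1) / (1 + v (k + 1)) - v k / (1 + v k)) := by
    intro k
    have hk := hv k
    have hmono : ρ * v k / (1 + ρ * v k) ≤ v (k + 1) / (1 + v (k + 1)) := by
      have hpos : 0 < ρ * v k := by positivity
      have := hgrow k
      rw [div_le_div_iff₀ (by linarith) (by linarith)]
      nlinarith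
    have hdiff : (ρ - 1) * v k / ((1 + ρ * v k) * (1 + v k))
        = ρ * v k / (1 + ρ * v k) - v k / (1 + v k) := by
      have : 0 < 1 + ρ * v k := by positivity
      field_simp
      ring
    have hmain : min (v k) (v k)⁻¹ ≤
        2 * (ρ + 1) / (ρ - 1) * ((ρ - 1) * v k / ((1 + ρ * v k) * (1 + v k))) := by
      have h1 : 2 * (ρ + 1) / (ρ - 1) * ((ρ - 1) * v k / ((1 + ρ * v k) * (1 + v k)))
          = 2 * (ρ + 1) * v k / ((1 + ρ * v k) * (1 + v k)) := by
        have : 0 < 1 + ρ * v k := by positivity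
        field_simp
      rw [h1, le_div_iff₀ (by positivity)]
      rcases le_total (v k) 1 with h | h
      · calc min (v k) (v k)⁻¹ * ((1 + ρ * v k) * (1 + v k))
            ≤ v k * ((1 + ρ) * 2) := by
              refine mul_le_mul (min_le_left _ _) ?_ (by positivity) hk.le
              refine mul_le_mul ?_ (by linarith) (by positivity) (by positivity)
              nlinarith
          _ = 2 * (ρ + 1) * v k := by ring
      · calc min (v k) (v k)⁻¹ * ((1 + ρ * v k) * (1 + v k))
            ≤ (v k)⁻¹ * (((1 + ρ) * v k) * (2 * v k)) := by
              refine mul_le_mul (min_le_right _ _) ?_ (by positivity) (by positivity)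
              refine mul_le_mul ?_ (by linarith) (by positivity) (by positivity)
              nlinarith
          _ = 2 * (ρ + 1) * v k := by field_simp; ring
    refine hmain.trans (mul_le_mul_of_nonneg_left ?_ (by positivity))
    rw [hdiff]
    linarith
  calc ∑ k ∈ Finset.range N, min (v k) (v k)⁻¹
      ≤ ∑ k ∈ Finset.range N,
        2 * (ρ + 1) / (ρ - 1) * (v (k + 1) / (1 + v (k + 1)) - v k / (1 + v k)) :=
        Finset.sum_le_sum fun k _ => hterm k
    _ = 2 * (ρ + 1) / (ρ - 1) * (v N / (1 + v N) - v 0 / (1 + v 0)) := by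
        rw [← Finset.mul_sum, Finset.sum_range_sub fun k => v k / (1 + v k)]
    _ ≤ 2 * (ρ + 1) / (ρ - 1) * 1 := by
        refine mul_le_mul_of_nonneg_left ?_ (by positivity)
        have h0 := hv 0
        have hN := hv N
        have h1 : 0 ≤ v 0 / (1 + v 0) := by positivity
        have h2 : v N / (1 + v N) ≤ 1 := by
          rw [div_le_one (by positivity)]; linarith
        linarith
    _ = _ := mul_one _

/-- The pointwise heart of the embedding, with `a = 1/p₀(x)` and `b = 1/p₁(x)`. The uniform bound
`g_k ≤ K w_k^b` increases geometrically in `k`, the integrability bound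
`g_k ≤ S^a w_k^{-(a-b)}` decreases geometrically, and they cross at `w_k = S`. -/
lemma sum_rpow_le {a b r θ K S : ℝ} (hr : 0 < r) (hθ : 0 < θ)
    (hθ1 : θ ≤ r * b) (hθ2 : θ ≤ r * (a - b)) (hK : 1 ≤ K) (hS : 0 < S)
    {w g : ℕ → ℝ} (hw : ∀ k, 0 < w k) (hgrow : ∀ k, 3 / 2 * w k ≤ w (k + 1))
    (hg0 : ∀ k, 0 ≤ g k) (hg1 : ∀ k, g k ≤ K * w k ^ b)
    (hg2 : ∀ k, g k ≤ S ^ a * w k ^ (-(a - b))) (N : ℕ) :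
    ∑ k ∈ Finset.range N, g k ^ r
      ≤ K ^ r * S ^ (r * b) *
        (2 * ((3 / 2 : ℝ) ^ θ + 1) / ((3 / 2 : ℝ) ^ θ - 1)) := by
  have hK0 : 0 < K := by linarith
  have hρ : (1 : ℝ) < (3 / 2 : ℝ) ^ θ := Real.one_lt_rpow (by norm_num) hθ
  have hv : ∀ k, 0 < (w k / S) ^ θ := fun k => by have := hw k; positivity
  have hvgrow : ∀ k, (3 / 2 : ℝ) ^ θ * (w k / S) ^ θ ≤ (w (k + 1) / S) ^ θ := by
    intro k
    have hk := hw k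
    rw [← Real.mul_rpow (by norm_num) (by positivity)]
    refine Real.rpow_le_rpow (by positivity) ?_ hθ.le
    rw [← mul_div_assoc]
    exact div_le_div_of_nonneg_right (hgrow k) hS.le
  have hterm : ∀ k, g k ^ r ≤ K ^ r * S ^ (r * b) *
      min ((w k / S) ^ θ) ((w k / S) ^ θ)⁻¹ := by
    intro k
    have hk := hw k
    have hu : 0 < w k / S := by positivity
    have hwS : w k = S * (w k / S) := by field_simp
    rcases le_total (w k / S) 1 with h | h
    · have h1 : (w k / S) ^ θ ≤ 1 := Real.rpow_le_one hu.le h hθ.le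
      have h2 : min ((w k / S) ^ θ) ((w k / S) ^ θ)⁻¹ = (w k / S) ^ θ :=
        min_eq_left (h1.trans ((one_le_inv₀ (hv k)).2 h1))
      rw [h2]
      calc g k ^ r ≤ (K * w k ^ b) ^ r := Real.rpow_le_rpow (hg0 k) (hg1 k) hr.le
        _ = K ^ r * S ^ (r * b) * (w k / S) ^ (r * b) := by
            rw [Real.mul_rpow hK0.le (by positivity), ← Real.rpow_mul hk.le, mul_comm b r,
              mul_assoc, ← Real.mul_rpow hS.le hu.le, ← hwS]
        _ ≤ K ^ r * S ^ (r * b) * (w k / S) ^ θ :=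
            mul_le_mul_of_nonneg_left (Real.rpow_le_rpow_of_exponent_ge hu h hθ1) (by positivity)
    · have h1 : 1 ≤ (w k / S) ^ θ := Real.one_le_rpow h hθ.le
      have h2 : min ((w k / S) ^ θ) ((w k / S) ^ θ)⁻¹ = ((w k / S) ^ θ)⁻¹ :=
        min_eq_right ((inv_le_one_of_one_le₀ h1).trans h1)
      rw [h2]
      calc g k ^ r ≤ (S ^ a * w k ^ (-(a - b))) ^ r :=
            Real.rpow_le_rpow (hg0 k) (hg2 k) hr.le
        _ = S ^ (r * a) * w k ^ (-(r * (a - b))) := by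
            rw [Real.mul_rpow (by positivity) (by positivity), ← Real.rpow_mul hS.le,
              ← Real.rpow_mul hk.le]
            congr 2 <;> ring
        _ = S ^ (r * b) * (w k / S) ^ (-(r * (a - b))) := by
            rw [Real.div_rpow hk.le hS.le, mul_div_assoc', _root_.eq_div_iff (by positivity),
              mul_right_comm, ← Real.rpow_add hS]
            congr 2; ring
        _ ≤ S ^ (r * b) * (w k / S) ^ (-θ) :=
            mul_le_mul_of_nonneg_left
              (Real.rpow_le_rpow_of_exponent_le h (by linarith)) (by positivity)
        _ = 1 * S ^ (r * b) * ((w k / S) ^ θ)⁻¹ := by rw [Real.rpow_neg hu.le, one_mul]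
        _ ≤ K ^ r * S ^ (r * b) * ((w k / S) ^ θ)⁻¹ := by
            gcongr
            exact Real.one_le_rpow hK hr.le
  calc ∑ k ∈ Finset.range N, g k ^ r
      ≤ ∑ k ∈ Finset.range N, K ^ r * S ^ (r * b) *
          min ((w k / S) ^ θ) ((w k / S) ^ θ)⁻¹ := Finset.sum_le_sum fun k _ => hterm k
    _ ≤ _ := by
        rw [← Finset.mul_sum]
        exact mul_le_mul_of_nonneg_left (sum_min_inv_le hρ hv hvgrow N) (by positivity)

/-! ### Regularisation of the weights -/

/-- A slowly decaying majorant of the sequence `μ` with comparable sum. -/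
def slowMajorant (μ : ℕ → ℝ) : ℕ → ℝ
  | 0 => μ 0
  | k + 1 => μ (k + 1) + 3 / 4 * slowMajorant μ k

lemma slowMajorant_nonneg {μ : ℕ → ℝ} (hμ : ∀ k, 0 ≤ μ k) : ∀ k, 0 ≤ slowMajorant μ k
  | 0 => hμ 0
  | k + 1 => by
    have h1 := slowMajorant_nonneg hμ k
    have h2 := hμ (k + 1)
    rw [slowMajorant]; positivity

lemma le_slowMajorant {μ : ℕ → ℝ} (hμ : ∀ k, 0 ≤ μ k) : ∀ k, μ k ≤ slowMajorant μ k
  | 0 => le_rfl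
  | k + 1 => by
    have h1 := slowMajorant_nonneg hμ k
    rw [slowMajorant]; linarith

lemma slowMajorant_succ {μ : ℕ → ℝ} (hμ : ∀ k, 0 ≤ μ k) (k : ℕ) :
    3 / 4 * slowMajorant μ k ≤ slowMajorant μ (k + 1) := by
  rw [slowMajorant]; linarith [hμ (k + 1)]

lemma pow_le_slowMajorant {μ : ℕ → ℝ} (hμ : ∀ k, 0 ≤ μ k) (h0 : 1 ≤ μ 0) :
    ∀ k, (3 / 4 : ℝ) ^ k ≤ slowMajorant μ k
  | 0 => by simpa [slowMajorant] using h0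
  | k + 1 => by
    have h1 := pow_le_slowMajorant hμ h0 k
    have h2 := slowMajorant_succ hμ k
    rw [pow_succ]; linarith

lemma sum_slowMajorant (μ : ℕ → ℝ) (N : ℕ) :
    ∑ k ∈ Finset.range (N + 1), slowMajorant μ k + 3 * slowMajorant μ N
      = 4 * ∑ k ∈ Finset.range (N + 1), μ k := by
  induction N with
  | zero => simp [slowMajorant]; ring
  | succ N ih =>
    rw [Finset.sum_range_succ, Finset.sum_range_succ μ (N + 1), mul_add, ← ih]
    simp only [slowMajorant]
    ring

/-! ### From integrability to a uniform bound on cubes -/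

/-- A function constant on `Q_{j,m}` (up to the weight) with modular at most one there satisfies
the uniform bound `2^{j s₁} c ≤ K (L 2^{jn})^{1/p₁}` on this cube. Log-Hölder continuity
of `s₁` and `1/p₁` is what allows to pass from one point of the cube to any other; the lower bound
on `L` is needed to control the oscillation of `L^{1/p₁(x)}`. -/
lemma exists_uniform_bound {n : ℕ} (hn : 0 < n) {P0 P1 s₀ s₁ : EuclideanSpace ℝ (Fin n) → ℝ}
    {c0 : ℝ} (hc0 : 0 < c0) (hP0 : ∀ x, c0 ≤ P0 x)
    (hs₁ : LocLogHolder s₁) (hP1 : LocLogHolder fun x => (P1 x)⁻¹)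
    (hsob : ∀ x, s₀ x - n * (P0 x)⁻¹ = s₁ x - n * (P1 x)⁻¹) :
    ∃ K : ℝ, 1 ≤ K ∧ ∀ (j : ℕ) (m : Fin n → ℤ) (L c : ℝ), (3 / 4 : ℝ) ^ j ≤ L → L ≤ 12 →
      0 ≤ c →
      (∫⁻ x in Qcube n j m,
        ENNReal.ofReal ((2 ^ ((j : ℝ) * s₀ x) * c * L ^ (-(P1 x)⁻¹)) ^ P0 x)) ≤ 1 →
      ∀ x ∈ Qcube n j m,
        2 ^ ((j : ℝ) * s₁ x) * c ≤ K * (L * 2 ^ ((j : ℝ) * n)) ^ (P1 x)⁻¹ := by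
  obtain ⟨D1, hD1, hosc1⟩ := hs₁.osc_le hn
  obtain ⟨D2, hD2, hosc2⟩ := hP1.osc_le hn
  have hl2 : 0 < Real.log 2 := Real.log_pos (by norm_num)
  have hl2' : Real.log 2 ≤ 1 := by
    have := Real.log_le_sub_one_of_pos (x := 2) (by norm_num); linarith
  refine ⟨Real.exp (D1 + n * D2 + 3 * D2 + c0⁻¹), Real.one_le_exp (by positivity),
    fun j m L c hL hL' hc hint x hx => ?_⟩
  have hL0 : 0 < L := lt_of_lt_of_le (by positivity) hL
  rcases hc.eq_or_lt with rfl | hc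
  · rw [mul_zero]; positivity
  have hlogL : |Real.log L| ≤ 3 * ((j : ℝ) + 1) := by
    have h1 : Real.log L ≤ 3 := by
      rw [Real.log_le_iff_le_exp hL0]
      have h2 : Real.exp 3 = Real.exp 1 ^ 3 := by rw [← Real.exp_nat_mul]; norm_num
      have h3 := Real.exp_one_gt_d9
      have h4 : (2.7 : ℝ) ^ 3 ≤ Real.exp 1 ^ 3 :=
        pow_le_pow_left₀ (by norm_num) (by linarith) 3
      rw [h2]
      norm_num at h4
      linarith
    have h2 : -(j : ℝ) ≤ Real.log L := by
      have h3 : Real.log ((3 / 4 : ℝ) ^ j) ≤ Real.log L := Real.log_le_log (by positivity) hL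
      rw [Real.log_pow] at h3
      have h4 : (-1 : ℝ) ≤ Real.log (3 / 4) := by
        have := Real.one_sub_inv_le_log_of_pos (x := (3 / 4 : ℝ)) (by norm_num)
        norm_num at this
        linarith
      have h5 : (0 : ℝ) ≤ j := Nat.cast_nonneg j
      nlinarith
    rw [abs_le]
    have h5 : (0 : ℝ) ≤ j := Nat.cast_nonneg j
    constructor <;> linarith
  -- The mean of the integrand over the cube is at most `2^{jn}`, so at some `y` it is at most
  -- twice this value.
  obtain ⟨y, hy, hyle⟩ : ∃ y ∈ Qcube n j m,
      (2 ^ ((j : ℝ) * s₀ y) * c * L ^ (-(P1 y)⁻¹)) ^ P0 y ≤ 2 * 2 ^ ((j : ℝ) * n) := by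
    by_contra! hcon
    have h1 : ∫⁻ _x in Qcube n j m, ENNReal.ofReal (2 * 2 ^ ((j : ℝ) * n)) ≤ 1 := by
      refine le_trans (setLIntegral_mono' (measurableSet_Qcube n j m) fun z hz => ?_) hint
      exact ENNReal.ofReal_le_ofReal (hcon z hz).le
    rw [setLIntegral_const, volume_Qcube, ← ENNReal.ofReal_mul (by positivity), mul_assoc,
      ← Real.rpow_add (by norm_num), add_neg_cancel, Real.rpow_zero] at h1
    norm_num at h1
  have hP0y : 0 < P0 y := hc0.trans_le (hP0 y)
  have hlog := Real.log_le_log (by positivity) hyle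
  rw [Real.log_rpow (by positivity), Real.log_mul (by positivity) (by positivity),
    Real.log_mul (by positivity) (by positivity), Real.log_rpow (by norm_num),
    Real.log_rpow hL0, Real.log_mul (by norm_num) (by positivity),
    Real.log_rpow (by norm_num), ← le_div_iff₀' hP0y, div_eq_mul_inv] at hlog
  have hinv : (P0 y)⁻¹ ≤ c0⁻¹ := inv_anti₀ hc0 (hP0 y)
  have hinv0 : 0 < (P0 y)⁻¹ := by positivity
  have o1 := hosc1 j m x y hx hy
  have o2 : ((j : ℝ) + 1) * |(P1 x)⁻¹ - (P1 y)⁻¹| ≤ D2 := hosc2 j m x y hx hy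
  have hj : (0 : ℝ) ≤ j := Nat.cast_nonneg j
  rw [← Real.log_le_log_iff (by positivity) (by positivity),
    Real.log_mul (by positivity) (by positivity), Real.log_mul (by positivity) (by positivity),
    Real.log_rpow (by norm_num), Real.log_exp, Real.log_rpow (by positivity),
    Real.log_mul (by positivity) (by positivity), Real.log_rpow (by norm_num)]
  have habs : ∀ t D : ℝ, 0 ≤ D → ((j : ℝ) + 1) * |t| ≤ D → (j : ℝ) * t * Real.log 2 ≤ D := by
    intro t D hD ht
    have h1 : (j : ℝ) * t ≤ D := by nlinarith [le_abs_self t, abs_nonneg t]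
    nlinarith
  have e1 := habs _ _ hD1 o1
  rw [abs_sub_comm] at o2
  have e2 := mul_le_mul_of_nonneg_left (habs _ _ hD2 o2) (Nat.cast_nonneg (α := ℝ) n)
  have e3 : Real.log L * ((P1 y)⁻¹ - (P1 x)⁻¹) ≤ 3 * D2 := by
    refine (le_abs_self _).trans ?_
    rw [abs_mul]
    have := mul_le_mul_of_nonneg_right hlogL (abs_nonneg ((P1 y)⁻¹ - (P1 x)⁻¹))
    linarith
  have e4 : Real.log 2 * (P0 y)⁻¹ ≤ c0⁻¹ := by nlinarith
  have hy' : s₀ y = s₁ y - n * (P1 y)⁻¹ + n * (P0 y)⁻¹ := by linarith [hsob y]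
  rw [hy'] at hlog
  nlinarith

/-! ### The pointwise estimate for extended nonnegative sums -/

/-- The crossing of the two bounds takes place at `S = ∑_k g_k^{p₀} w_k^{1 - p₀/p₁}`, which turns
`sum_rpow_le` into an estimate by an integrable quantity; here `1 - p₀/p₁ = p₀ (1/p₀ - 1/p₁)`. -/
lemma tsum_rpow_pointwise {P0 P1 r θ K B : ℝ} (hP0 : 0 < P0) (hP1 : 0 < P1) (hPB : P1 ≤ B)
    (hr : 0 < r) (hθ : 0 < θ) (hθ1 : θ ≤ r * P1⁻¹) (hθ2 : θ ≤ r * (P0⁻¹ - P1⁻¹)) (hK : 1 ≤ K)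
    {w g : ℕ → ℝ} (hw : ∀ k, 0 < w k) (hgrow : ∀ k, 3 / 2 * w k ≤ w (k + 1))
    (hg0 : ∀ k, 0 ≤ g k) (hg1 : ∀ k, g k ≤ K * w k ^ P1⁻¹) :
    ((∑' k, ENNReal.ofReal (g k) ^ r) ^ r⁻¹) ^ P1
      ≤ ENNReal.ofReal
          (K ^ B * (2 * ((3 / 2 : ℝ) ^ θ + 1) / ((3 / 2 : ℝ) ^ θ - 1)) ^ (r⁻¹ * B)) *
        ∑' k, ENNReal.ofReal (g k ^ P0 * w k ^ (P0 * (P0⁻¹ - P1⁻¹))) := by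
  have hK0 : 0 < K := by linarith
  have hρ : (1 : ℝ) < (3 / 2 : ℝ) ^ θ := Real.one_lt_rpow (by norm_num) hθ
  set M := 2 * ((3 / 2 : ℝ) ^ θ + 1) / ((3 / 2 : ℝ) ^ θ - 1) with hM
  have hM1 : 1 ≤ M := by
    rw [hM, le_div_iff₀ (by linarith)]
    linarith
  have hM0 : 0 < M := by linarith
  have hT : ∀ k, 0 ≤ g k ^ P0 * w k ^ (P0 * (P0⁻¹ - P1⁻¹)) := fun k => by
    have := hw k; have := hg0 k; positivity
  have hCpos : 0 < K ^ B * M ^ (r⁻¹ * B) := by positivity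
  set T := ∑' k, ENNReal.ofReal (g k ^ P0 * w k ^ (P0 * (P0⁻¹ - P1⁻¹))) with hTdef
  rcases eq_or_ne T ∞ with hTtop | hTtop
  · rw [hTtop, ENNReal.mul_top (ENNReal.ofReal_pos.2 hCpos).ne']
    exact le_top
  rcases eq_or_ne T 0 with hT0 | hT0
  · have hg : ∀ k, g k = 0 := by
      intro k
      have h1 := ENNReal.tsum_eq_zero.1 hT0 k
      have h2 := le_antisymm (ENNReal.ofReal_eq_zero.1 h1) (hT k)
      have h3 : w k ^ (P0 * (P0⁻¹ - P1⁻¹)) ≠ 0 := (Real.rpow_pos_of_pos (hw k) _).ne'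
      have h4 := (mul_eq_zero.1 h2).resolve_right h3
      exact ((Real.rpow_eq_zero (hg0 k) hP0.ne').1 h4)
    simp [hg, ENNReal.zero_rpow_of_pos, hr, hP1]
  have hS : 0 < T.toReal := ENNReal.toReal_pos hT0 hTtop
  have hg2 : ∀ k, g k ≤ T.toReal ^ P0⁻¹ * w k ^ (-(P0⁻¹ - P1⁻¹)) := by
    intro k
    have hk := hw k
    have h1 : g k ^ P0 * w k ^ (P0 * (P0⁻¹ - P1⁻¹)) ≤ T.toReal :=
      (ENNReal.ofReal_le_iff_le_toReal hTtop).1 (ENNReal.le_tsum k)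
    have h2 : g k ^ P0 ≤ T.toReal * w k ^ (-(P0 * (P0⁻¹ - P1⁻¹))) := by
      rw [Real.rpow_neg hk.le, ← div_eq_mul_inv, le_div_iff₀ (by positivity)]
      exact h1
    have h3 := Real.rpow_le_rpow (Real.rpow_nonneg (hg0 k) _) h2 (inv_nonneg.2 hP0.le)
    rw [Real.rpow_rpow_inv (hg0 k) hP0.ne', Real.mul_rpow hS.le (by positivity),
      ← Real.rpow_mul hk.le] at h3
    convert h3 using 3
    field_simp
  have hsum : ∑' k, ENNReal.ofReal (g k) ^ r
      ≤ ENNReal.ofReal (K ^ r * T.toReal ^ (r * P1⁻¹) * M) := by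
    refine ENNReal.tsum_le_of_sum_range_le fun N => ?_
    have h1 := sum_rpow_le hr hθ hθ1 hθ2 hK hS hw hgrow hg0 hg1 hg2 N
    refine le_trans (le_of_eq ?_) (ENNReal.ofReal_le_ofReal h1)
    rw [ENNReal.ofReal_sum_of_nonneg fun k _ => Real.rpow_nonneg (hg0 k) _]
    exact Finset.sum_congr rfl fun k _ => ENNReal.ofReal_rpow_of_nonneg (hg0 k) hr.le
  calc ((∑' k, ENNReal.ofReal (g k) ^ r) ^ r⁻¹) ^ P1
      ≤ (ENNReal.ofReal (K ^ r * T.toReal ^ (r * P1⁻¹) * M) ^ r⁻¹) ^ P1 :=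
        ENNReal.rpow_le_rpow (ENNReal.rpow_le_rpow hsum (inv_nonneg.2 hr.le)) hP1.le
    _ = ENNReal.ofReal (K ^ P1 * M ^ (r⁻¹ * P1) * T.toReal) := by
        rw [ENNReal.ofReal_rpow_of_nonneg (by positivity) (by positivity),
          ENNReal.ofReal_rpow_of_nonneg (by positivity) hP1.le, ← Real.rpow_mul (by positivity),
          Real.mul_rpow (by positivity) hM0.le, Real.mul_rpow (by positivity) (by positivity),
          ← Real.rpow_mul hK0.le, ← Real.rpow_mul hS.le]
        have e1 : r * (r⁻¹ * P1) = P1 := by field_simp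
        have e2 : r * P1⁻¹ * (r⁻¹ * P1) = 1 := by field_simp
        rw [e1, e2, Real.rpow_one]
        congr 1
        ring
    _ ≤ ENNReal.ofReal (K ^ B * M ^ (r⁻¹ * B) * T.toReal) := by
        refine ENNReal.ofReal_le_ofReal (mul_le_mul_of_nonneg_right ?_ hS.le)
        refine mul_le_mul (Real.rpow_le_rpow_of_exponent_le hK hPB) ?_ (by positivity)
          (by positivity)
        exact Real.rpow_le_rpow_of_exponent_le hM1
          (mul_le_mul_of_nonneg_left hPB (inv_nonneg.2 hr.le))
    _ = ENNReal.ofReal (K ^ B * M ^ (r⁻¹ * B)) * T := by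
        rw [ENNReal.ofReal_mul hCpos.le, ENNReal.ofReal_toReal hTtop]

/-! ### Modulars -/

lemma varModular_of_ne_top {n : ℕ} {p : EuclideanSpace ℝ (Fin n) → ℝ≥0∞} (hp : ∀ x, p x ≠ ∞)
    (g : EuclideanSpace ℝ (Fin n) → ℝ≥0∞) :
    varModular p g = ∫⁻ x, g x ^ (p x).toReal := by
  have h1 : {x | p x ≠ ∞} = Set.univ := Set.eq_univ_of_forall hp
  have h2 : {x | p x = ∞} = ∅ := Set.eq_empty_of_forall_notMem hp
  simp [varModular, h1, h2]

/-- The `ℓ_s`-norm is bounded by the `ℓ_r`-norm for `r ≤ s`. -/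
lemma tsum_rpow_inv_anti {r s : ℝ} (hr : 0 < r) (hrs : r ≤ s) (a : ℕ → ℝ≥0∞) :
    (∑' k, a k ^ s) ^ s⁻¹ ≤ (∑' k, a k ^ r) ^ r⁻¹ := by
  have hs : 0 < s := hr.trans_le hrs
  rw [ENNReal.rpow_inv_le_iff hs]
  set A := ∑' k, a k ^ r with hA
  have hle : ∀ k, a k ≤ A ^ r⁻¹ := fun k => by
    rw [ENNReal.le_rpow_inv_iff hr]
    exact ENNReal.le_tsum k
  have hsr : s = r + (s - r) := by ring
  calc ∑' k, a k ^ s ≤ ∑' k, a k ^ r * (A ^ r⁻¹) ^ (s - r) := by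
        refine ENNReal.tsum_le_tsum fun k => ?_
        conv_lhs => rw [hsr, ENNReal.rpow_add_of_nonneg _ _ hr.le (by linarith)]
        exact mul_le_mul_right (ENNReal.rpow_le_rpow (hle k) (by linarith)) _
    _ = (A ^ r⁻¹) ^ r * (A ^ r⁻¹) ^ (s - r) := by
        rw [ENNReal.tsum_mul_right, ENNReal.rpow_inv_rpow hr.ne']
    _ = (A ^ r⁻¹) ^ s := by
        rw [← ENNReal.rpow_add_of_nonneg _ _ hr.le (by linarith), ← hsr]

lemma iSup_le_tsum_rpow_inv {r : ℝ} (hr : 0 < r) (a : ℕ → ℝ≥0∞) :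
    ⨆ k, a k ≤ (∑' k, a k ^ r) ^ r⁻¹ := by
  refine iSup_le fun k => ?_
  rw [ENNReal.le_rpow_inv_iff hr]
  exact ENNReal.le_tsum k

/-- From a sequence with mixed modular at most one one obtains weights `lam` with bounded sum
for which every term of the sequence has modular at most one, and which decay slowly. -/
lemma exists_weights {n : ℕ} {p₀ p₁ : EuclideanSpace ℝ (Fin n) → ℝ≥0∞} (hp₀ : ∀ x, p₀ x ≠ ∞)
    {f : ℕ → EuclideanSpace ℝ (Fin n) → ℝ≥0∞} (hf : mixedModular p₁ p₀ f ≤ 1) :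
    ∃ lam : ℕ → ℝ, (∀ k, (3 / 4 : ℝ) ^ k ≤ lam k) ∧ (∀ k, lam k ≤ 12) ∧
      (∀ k, 3 / 4 * lam k ≤ lam (k + 1)) ∧ (∑' k, ENNReal.ofReal (lam k) ≤ 12) ∧
      ∀ k, ∫⁻ x, (f k x / ENNReal.ofReal (lam k) ^ ((p₁ x)⁻¹).toReal) ^ (p₀ x).toReal ≤ 1 := by
  unfold mixedModular at hf
  set l : ℕ → ℝ≥0∞ := fun k => sInf {lam : ℝ≥0∞ | 0 < lam ∧
    varModular p₀ (fun x => f k x / lam ^ ((p₁ x)⁻¹).toReal) ≤ 1} with hl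
  have hltop : ∀ k, l k ≠ ∞ := fun k =>
    ((ENNReal.le_tsum k).trans_lt (hf.trans_lt ENNReal.one_lt_top)).ne
  set μ : ℕ → ℝ := fun k => (l k).toReal + (1 / 2 : ℝ) ^ k with hμ
  have hμ0 : ∀ k, 0 ≤ μ k := fun k => by positivity
  have hμsum : ∀ N, ∑ k ∈ Finset.range N, μ k ≤ 3 := by
    intro N
    have h1 : ∑ k ∈ Finset.range N, (l k).toReal ≤ 1 := by
      rw [← ENNReal.toReal_sum fun k _ => hltop k]
      exact ENNReal.toReal_le_of_le_ofReal zero_le_one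
        (by rw [ENNReal.ofReal_one]; exact (ENNReal.sum_le_tsum _).trans hf)
    have h2 := sum_geometric_two_le N
    simp only [hμ, Finset.sum_add_distrib]
    linarith
  have hsl := slowMajorant_nonneg hμ0
  have hlamsum : ∀ N, ∑ k ∈ Finset.range (N + 1), slowMajorant μ k ≤ 12 := by
    intro N
    have h1 := sum_slowMajorant μ N
    have h2 := hμsum (N + 1)
    have h3 := hsl N
    linarith
  refine ⟨slowMajorant μ, pow_le_slowMajorant hμ0 (by simp [hμ]), fun k => ?_,
    slowMajorant_succ hμ0, ?_, fun k => ?_⟩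
  · exact (Finset.single_le_sum (fun i _ => hsl i) (Finset.self_mem_range_succ k)).trans
      (hlamsum k)
  · refine ENNReal.tsum_le_of_sum_range_le fun N => ?_
    rw [← ENNReal.ofReal_sum_of_nonneg fun k _ => hsl k]
    have h1 : ∑ k ∈ Finset.range N, slowMajorant μ k ≤ 12 :=
      (Finset.sum_le_sum_of_subset_of_nonneg (Finset.range_mono (Nat.le_succ N))
        fun i _ _ => hsl i).trans (hlamsum N)
    simpa using ENNReal.ofReal_le_ofReal h1
  · have h1 : l k < ENNReal.ofReal (slowMajorant μ k) := by
      rw [← ENNReal.ofReal_toReal (hltop k), ENNReal.ofReal_lt_ofReal_iff_of_nonneg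
        ENNReal.toReal_nonneg]
      refine lt_of_lt_of_le ?_ (le_slowMajorant hμ0 k)
      have : (0 : ℝ) < (1 / 2 : ℝ) ^ k := by positivity
      simp only [hμ]
      linarith
    obtain ⟨lam, ⟨_, hmod⟩, hlt⟩ := sInf_lt_iff.1 h1
    rw [varModular_of_ne_top hp₀] at hmod
    refine le_trans (lintegral_mono fun x => ?_) hmod
    refine ENNReal.rpow_le_rpow ?_ ENNReal.toReal_nonneg
    exact ENNReal.div_le_div_left (ENNReal.rpow_le_rpow hlt.le ENNReal.toReal_nonneg) _

/-! ### The modular estimate -/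

/-- The embedding at the level of modulars, with the inner exponent `q` replaced by an arbitrary
constant `r > 0`. -/
lemma lintegral_tsum_rpow_le {n : ℕ} (hn : 0 < n) {p₀ p₁ : EuclideanSpace ℝ (Fin n) → ℝ≥0∞}
    {s₀ s₁ : EuclideanSpace ℝ (Fin n) → ℝ} (hp₀m : Measurable p₀) (hp₁m : Measurable p₁)
    (hp₀top : ∀ x, p₀ x ≠ ∞) {c0 B δ r : ℝ} (hc0 : 0 < c0)
    (hc0' : ∀ x, c0 ≤ (p₀ x).toReal) (hB : ∀ x, (p₁ x).toReal ≤ B)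
    (hp₁pos : ∀ x, 0 < (p₁ x).toReal)
    (hp₁ : LocLogHolder fun x => ((p₁ x)⁻¹).toReal)
    (hs₀ : LocLogHolder s₀) (hs₁ : LocLogHolder s₁)
    (hδ : 0 < δ) (hs : ∀ x, δ ≤ s₀ x - s₁ x)
    (hsob : ∀ x, s₀ x - n * ((p₀ x)⁻¹).toReal = s₁ x - n * ((p₁ x)⁻¹).toReal) (hr : 0 < r) :
    ∃ M : ℝ, 1 ≤ M ∧ ∀ c : ℕ → (Fin n → ℤ) → ℝ, (∀ j m, 0 ≤ c j m) →
      mixedModular p₁ p₀ (fun j x =>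
        ENNReal.ofReal (2 ^ ((j : ℝ) * s₀ x) * c j (cubeIdx n j x))) ≤ 1 →
      ∫⁻ x, ((∑' j : ℕ, ENNReal.ofReal (2 ^ ((j : ℝ) * s₁ x) * c j (cubeIdx n j x)) ^ r) ^ r⁻¹)
        ^ (p₁ x).toReal ≤ ENNReal.ofReal M := by
  have hP0pos : ∀ x, 0 < (p₀ x).toReal := fun x => hc0.trans_le (hc0' x)
  simp only [ENNReal.toReal_inv] at hp₁ hsob
  obtain ⟨K, hK1, hK⟩ := exists_uniform_bound hn hc0 hc0' hs₁ hp₁ hsob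
  have hK0 : 0 < K := by linarith
  have hn' : (0 : ℝ) < n := by exact_mod_cast hn
  have hB0 : 0 < B := (hp₁pos 0).trans_le (hB 0)
  -- `B⁻¹` and `δ / n` are uniform lower bounds for `1/p₁` and `1/p₀ - 1/p₁`.
  set θ : ℝ := r * min B⁻¹ (δ / n) with hθdef
  have hθ : 0 < θ := by positivity
  have hθ1 : ∀ x, θ ≤ r * ((p₁ x).toReal)⁻¹ := fun x =>
    mul_le_mul_of_nonneg_left ((min_le_left _ _).trans (inv_anti₀ (hp₁pos x) (hB x))) hr.le
  have hθ2 : ∀ x, θ ≤ r * (((p₀ x).toReal)⁻¹ - ((p₁ x).toReal)⁻¹) := fun x => by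
    refine mul_le_mul_of_nonneg_left ((min_le_right _ _).trans ?_) hr.le
    rw [div_le_iff₀ hn']
    linarith [hsob x, hs x]
  set M := K ^ B * (2 * ((3 / 2 : ℝ) ^ θ + 1) / ((3 / 2 : ℝ) ^ θ - 1)) ^ (r⁻¹ * B) with hM
  have hρ : (1 : ℝ) < (3 / 2 : ℝ) ^ θ := Real.one_lt_rpow (by norm_num) hθ
  have hM1 : 1 ≤ M := by
    refine one_le_mul_of_one_le_of_one_le (Real.one_le_rpow hK1 hB0.le)
      (Real.one_le_rpow ?_ (by positivity))
    rw [le_div_iff₀ (by linarith)]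
    linarith
  refine ⟨M * 12, by linarith, fun c hc hmod => ?_⟩
  obtain ⟨lam, hlam1, hlam2, hlam3, hlam4, hlam5⟩ := exists_weights hp₀top hmod
  have hlam0 : ∀ k, 0 < lam k := fun k => lt_of_lt_of_le (by positivity) (hlam1 k)
  set φ : ℕ → EuclideanSpace ℝ (Fin n) → ℝ := fun j x =>
    2 ^ ((j : ℝ) * s₀ x) * c j (cubeIdx n j x) * lam j ^ (-((p₁ x).toReal)⁻¹) with hφ
  have hφ0 : ∀ j x, 0 ≤ φ j x := fun j x => by
    have := hlam0 j
    have := hc j (cubeIdx n j x)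
    positivity
  have hφint : ∀ j, ∫⁻ x, ENNReal.ofReal (φ j x ^ (p₀ x).toReal) ≤ 1 := by
    intro j
    refine le_trans (le_of_eq (lintegral_congr fun x => ?_)) (hlam5 j)
    have hj := hlam0 j
    rw [ENNReal.ofReal_rpow_of_pos hj, ← ENNReal.ofReal_div_of_pos (by positivity),
      ENNReal.ofReal_rpow_of_nonneg _ ENNReal.toReal_nonneg, ENNReal.toReal_inv]
    · simp only [hφ]
      rw [Real.rpow_neg hj.le, ← div_eq_mul_inv]
    · have := hc j (cubeIdx n j x)
      positivity
  have hφmeas : ∀ j, Measurable fun x => ENNReal.ofReal (φ j x ^ (p₀ x).toReal) := by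
    intro j
    have h1 : Measurable fun x => c j (cubeIdx n j x) :=
      (measurable_of_countable (c j)).comp (measurable_cubeIdx n j)
    have h2 : Measurable s₀ := hs₀.continuous.measurable
    exact ((((h2.const_mul _).const_pow _).mul h1 |>.mul
      (hp₁m.ennreal_toReal.inv.neg.const_pow _)).pow hp₀m.ennreal_toReal).ennreal_ofReal
  have hpoint : ∀ x,
      ((∑' j : ℕ, ENNReal.ofReal (2 ^ ((j : ℝ) * s₁ x) * c j (cubeIdx n j x)) ^ r) ^ r⁻¹)
        ^ (p₁ x).toReal
      ≤ ENNReal.ofReal M *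
        ∑' j, ENNReal.ofReal (lam j) * ENNReal.ofReal (φ j x ^ (p₀ x).toReal) := by
    intro x
    have hP0 := hP0pos x
    have hg0 : ∀ j : ℕ, 0 ≤ 2 ^ ((j : ℝ) * s₁ x) * c j (cubeIdx n j x) := fun j => by
      have := hc j (cubeIdx n j x)
      positivity
    have hw : ∀ j : ℕ, 0 < lam j * 2 ^ ((j : ℝ) * n) := fun j => by
      have := hlam0 j
      positivity
    have hgrow : ∀ j : ℕ, 3 / 2 * (lam j * 2 ^ ((j : ℝ) * n))
        ≤ lam (j + 1) * 2 ^ (((j + 1 : ℕ) : ℝ) * n) := by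
      intro j
      have h1 : (2 : ℝ) ≤ 2 ^ (n : ℝ) := by
        conv_lhs => rw [← Real.rpow_one 2]
        exact Real.rpow_le_rpow_of_exponent_le (by norm_num) (by exact_mod_cast hn)
      have h2 : (2 : ℝ) ^ (((j + 1 : ℕ) : ℝ) * n) = 2 ^ ((j : ℝ) * n) * 2 ^ (n : ℝ) := by
        rw [← Real.rpow_add (by norm_num)]
        push_cast
        congr 1; ring
      rw [h2]
      have h3 := hlam3 j
      have h4 := hlam0 j
      have h5 := hlam0 (j + 1)
      calc 3 / 2 * (lam j * 2 ^ ((j : ℝ) * n))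
          = (3 / 4 * lam j) * (2 ^ ((j : ℝ) * n) * 2) := by ring
        _ ≤ lam (j + 1) * (2 ^ ((j : ℝ) * n) * 2 ^ (n : ℝ)) := by gcongr
    have hg1 : ∀ j : ℕ, 2 ^ ((j : ℝ) * s₁ x) * c j (cubeIdx n j x)
        ≤ K * (lam j * 2 ^ ((j : ℝ) * n)) ^ ((p₁ x).toReal)⁻¹ := by
      intro j
      refine hK j (cubeIdx n j x) (lam j) _ (hlam1 j) (hlam2 j) (hc _ _) ?_ x
        (mem_Qcube_iff.2 rfl)
      refine le_trans ?_ ((setLIntegral_le_lintegral (Qcube n j (cubeIdx n j x)) _).trans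
        (hφint j))
      refine setLIntegral_mono' (measurableSet_Qcube n j _) fun z hz => ?_
      simp only [hφ, mem_Qcube_iff.1 hz]
      exact le_rfl
    refine (tsum_rpow_pointwise hP0 (hp₁pos x) (hB x) hr hθ (hθ1 x) (hθ2 x) hK1 hw hgrow
      hg0 hg1).trans (le_of_eq ?_)
    congr 1
    refine tsum_congr fun j => ?_
    have hj := hlam0 j
    have hcj := hc j (cubeIdx n j x)
    rw [← ENNReal.ofReal_mul hj.le]
    congr 1
    simp only [hφ]
    have hlamexp : lam j ^ ((p₀ x).toReal * (((p₀ x).toReal)⁻¹ - ((p₁ x).toReal)⁻¹))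
        = lam j * lam j ^ (-((p₁ x).toReal)⁻¹ * (p₀ x).toReal) := by
      conv_rhs => enter [1]; rw [← Real.rpow_one (lam j)]
      rw [← Real.rpow_add hj]
      congr 1
      field_simp
      ring
    have htwo : (2 : ℝ) ^ ((j : ℝ) * s₁ x * (p₀ x).toReal) *
        2 ^ ((j : ℝ) * n * ((p₀ x).toReal * (((p₀ x).toReal)⁻¹ - ((p₁ x).toReal)⁻¹)))
        = 2 ^ ((j : ℝ) * s₀ x * (p₀ x).toReal) := by
      rw [← Real.rpow_add (by norm_num)]
      congr 1
      have : s₀ x = s₁ x + n * (((p₀ x).toReal)⁻¹ - ((p₁ x).toReal)⁻¹) := by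
        linarith [hsob x]
      rw [this]
      ring
    rw [Real.mul_rpow (by positivity) hcj, Real.mul_rpow hj.le (by positivity),
      Real.mul_rpow (by positivity) (by positivity), Real.mul_rpow (by positivity) hcj,
      ← Real.rpow_mul (by norm_num), ← Real.rpow_mul (by norm_num),
      ← Real.rpow_mul (by norm_num), ← Real.rpow_mul hj.le, hlamexp, ← htwo]
    ring
  calc _ ≤ ∫⁻ x, ENNReal.ofReal M *
        ∑' j, ENNReal.ofReal (lam j) * ENNReal.ofReal (φ j x ^ (p₀ x).toReal) :=
        lintegral_mono hpoint
    _ = ENNReal.ofReal M * ∑' j, ENNReal.ofReal (lam j) *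
          ∫⁻ x, ENNReal.ofReal (φ j x ^ (p₀ x).toReal) := by
        rw [lintegral_const_mul' _ _ ENNReal.ofReal_ne_top,
          lintegral_tsum fun j => ((hφmeas j).const_mul _).aemeasurable]
        congr 1
        exact tsum_congr fun j => lintegral_const_mul' _ _ ENNReal.ofReal_ne_top
    _ ≤ ENNReal.ofReal M * ∑' j, ENNReal.ofReal (lam j) := by
        gcongr with j
        exact mul_le_of_le_one_right' (hφint j)
    _ ≤ ENNReal.ofReal M * 12 := by gcongr
    _ = ENNReal.ofReal (M * 12) := by
        rw [ENNReal.ofReal_mul (zero_le_one.trans hM1), ENNReal.ofReal_ofNat]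

/-- **Franke embedding for sequence spaces with all exponents variable.**
If `p₀, p₁, q ∈ P^{log}` with `sup p₁ < ∞`, `s₀, s₁` are locally log-Hölder continuous,
`inf (s₀ − s₁) > 0` and `s₀(x) − n/p₀(x) = s₁(x) − n/p₁(x)` for all `x`, then
`b^{s₀(·)}_{p₀(·),p₁(·)}(ℝⁿ) ↪ f^{s₁(·)}_{p₁(·),q(·)}(ℝⁿ)`. -/
theorem franke_embedding_variable_exponents (n : ℕ) (hn : 0 < n)
    (p₀ p₁ q : EuclideanSpace ℝ (Fin n) → ℝ≥0∞)
    (s₀ s₁ : EuclideanSpace ℝ (Fin n) → ℝ)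
    (hp₀ : PLog p₀) (hp₁ : PLog p₁) (hq : PLog q)
    (hp₁top : ∃ b : ℝ≥0, ∀ x, p₁ x ≤ (b : ℝ≥0∞))
    (hs₀ : LocLogHolder s₀) (hs₁ : LocLogHolder s₁)
    (hs : ∃ δ : ℝ, 0 < δ ∧ ∀ x, δ ≤ s₀ x - s₁ x)
    (hsobolev : ∀ x, s₀ x - n * ((p₀ x)⁻¹).toReal = s₁ x - n * ((p₁ x)⁻¹).toReal) :
    ∃ C : ℝ≥0, 0 < C ∧ ∀ γ : ℕ → (Fin n → ℤ) → ℂ,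
      fVarNorm n s₁ p₁ q γ ≤ C * bVarNorm n s₀ p₀ p₁ γ := by
  obtain ⟨hp₀m, ⟨c₀, hc₀, hc₀'⟩, -⟩ := hp₀
  obtain ⟨hp₁m, ⟨c₁, hc₁, hc₁'⟩, hp₁log, -⟩ := hp₁
  obtain ⟨-, ⟨r, hr, hr'⟩, -⟩ := hq
  obtain ⟨B, hB⟩ := hp₁top
  obtain ⟨δ, hδ, hδs⟩ := hs
  have hp₁top : ∀ x, p₁ x ≠ ∞ := fun x => ((hB x).trans_lt ENNReal.coe_lt_top).ne
  -- `1/p₀ = 1/p₁ + (s₀ - s₁)/n` is positive, so `p₀` is finite.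
  have hp₀top : ∀ x, p₀ x ≠ ∞ := by
    intro x hx
    have h1 := hsobolev x
    have h2 := hδs x
    have h3 : 0 ≤ (n : ℝ) * ((p₁ x)⁻¹).toReal := by positivity
    rw [hx] at h1
    simp only [ENNReal.inv_top, ENNReal.toReal_zero, mul_zero, sub_zero] at h1
    linarith
  have hP0 : ∀ x, (c₀ : ℝ) ≤ (p₀ x).toReal := fun x => by
    simpa using ENNReal.toReal_mono (hp₀top x) (hc₀' x)
  have hP1 : ∀ x, (c₁ : ℝ) ≤ (p₁ x).toReal := fun x => by
    simpa using ENNReal.toReal_mono (hp₁top x) (hc₁' x)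
  have hP1B : ∀ x, (p₁ x).toReal ≤ B := fun x => by
    simpa using ENNReal.toReal_mono ENNReal.coe_ne_top (hB x)
  have hr0 : (0 : ℝ) < r := hr
  have hc₁0 : (0 : ℝ) < c₁ := hc₁
  obtain ⟨M, hM1, hM⟩ := lintegral_tsum_rpow_le hn hp₀m hp₁m hp₀top (c0 := c₀) hc₀ hP0 hP1B
    (fun x => hc₁0.trans_le (hP1 x)) hp₁log hs₀ hs₁ hδ hδs hsobolev hr0
  have hM0 : 0 < M := by linarith
  -- The exponent `1 / inf p₁` ensures `C ^ p₁(x) ≥ M` for all `x`.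
  set C : ℝ≥0 := Real.toNNReal (M ^ (c₁ : ℝ)⁻¹) with hC
  have hCpos : 0 < C := Real.toNNReal_pos.2 (by positivity)
  have hCne : (C : ℝ≥0∞) ≠ 0 := by exact_mod_cast hCpos.ne'
  have hCpow : ∀ x, ENNReal.ofReal M ≤ (C : ℝ≥0∞) ^ (p₁ x).toReal := by
    intro x
    change _ ≤ (ENNReal.ofReal (M ^ (c₁ : ℝ)⁻¹)) ^ (p₁ x).toReal
    rw [ENNReal.ofReal_rpow_of_pos (by positivity), ← Real.rpow_mul hM0.le]
    refine ENNReal.ofReal_le_ofReal ?_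
    conv_lhs => rw [← Real.rpow_one M]
    refine Real.rpow_le_rpow_of_exponent_le hM1 ?_
    rw [inv_mul_eq_div, one_le_div hc₁0]
    exact hP1 x
  refine ⟨C, hCpos, fun γ => ?_⟩
  unfold bVarNorm ellqLpNorm
  rw [mul_comm, ← ENNReal.div_le_iff hCne ENNReal.coe_ne_top]
  refine le_sInf ?_
  rintro mu ⟨hmu, hmod⟩
  rw [ENNReal.div_le_iff hCne ENNReal.coe_ne_top]
  rcases eq_or_ne mu ∞ with rfl | hmutop
  · rw [ENNReal.top_mul hCne]
    exact le_top
  have hmuR : 0 < mu.toReal := ENNReal.toReal_pos hmu.ne' hmutop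
  set c : ℕ → (Fin n → ℤ) → ℝ := fun j m => ‖γ j m‖ / mu.toReal with hc
  have hc0 : ∀ j m, 0 ≤ c j m := fun j m => by positivity
  have hblock : ∀ (s : EuclideanSpace ℝ (Fin n) → ℝ) (j : ℕ) (x : EuclideanSpace ℝ (Fin n)),
      seqBlocks s γ j x / mu
        = ENNReal.ofReal (2 ^ ((j : ℝ) * s x) * c j (cubeIdx n j x)) := by
    intro s j x
    rw [seqBlocks_eq]
    conv_lhs => rw [← ENNReal.ofReal_toReal hmutop]
    rw [← ENNReal.ofReal_div_of_pos hmuR, hc, mul_div_assoc]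
  simp only [hblock] at hmod
  have hmain := hM c hc0 hmod
  refine sInf_le ⟨ENNReal.mul_pos hmu.ne' hCne, ?_⟩
  rw [varModular_of_ne_top hp₁top]
  set G : EuclideanSpace ℝ (Fin n) → ℝ≥0∞ := fun x =>
    (∑' j : ℕ, ENNReal.ofReal (2 ^ ((j : ℝ) * s₁ x) * c j (cubeIdx n j x)) ^ (r : ℝ))
      ^ (r : ℝ)⁻¹ with hG
  have hF : ∀ x, (if q x = ∞ then ⨆ ν, seqBlocks s₁ γ ν x
      else (∑' ν : ℕ, seqBlocks s₁ γ ν x ^ (q x).toReal) ^ ((q x).toReal)⁻¹) ≤ mu * G x := by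
    intro x
    have h1 : (∑' j, seqBlocks s₁ γ j x ^ (r : ℝ)) ^ (r : ℝ)⁻¹ = mu * G x := by
      have h2 : ∀ j, seqBlocks s₁ γ j x ^ (r : ℝ) = mu ^ (r : ℝ) *
          ENNReal.ofReal (2 ^ ((j : ℝ) * s₁ x) * c j (cubeIdx n j x)) ^ (r : ℝ) := by
        intro j
        rw [← ENNReal.mul_rpow_of_nonneg _ _ hr0.le, ← hblock,
          ENNReal.mul_div_cancel hmu.ne' hmutop]
      simp only [h2, hG]
      rw [ENNReal.tsum_mul_left, ENNReal.mul_rpow_of_nonneg _ _ (inv_nonneg.2 hr0.le),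
        ENNReal.rpow_rpow_inv hr0.ne']
    rw [← h1]
    split_ifs with hqx
    · exact iSup_le_tsum_rpow_inv hr0 _
    · refine tsum_rpow_inv_anti hr0 ?_ _
      simpa using ENNReal.toReal_mono hqx (hr' x)
  calc _ ≤ ∫⁻ x, (ENNReal.ofReal M)⁻¹ * G x ^ (p₁ x).toReal := by
        refine lintegral_mono fun x => ?_
        have hP : 0 ≤ (p₁ x).toReal := ENNReal.toReal_nonneg
        calc _ ≤ (mu * G x / (mu * C)) ^ (p₁ x).toReal :=
              ENNReal.rpow_le_rpow (ENNReal.div_le_div_right (hF x) _) hP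
          _ = ((C : ℝ≥0∞)⁻¹ * G x) ^ (p₁ x).toReal := by
              rw [ENNReal.mul_div_mul_left _ _ hmu.ne' hmutop, div_eq_mul_inv, mul_comm]
          _ = ((C : ℝ≥0∞) ^ (p₁ x).toReal)⁻¹ * G x ^ (p₁ x).toReal := by
              rw [ENNReal.mul_rpow_of_nonneg _ _ hP, ENNReal.inv_rpow]
          _ ≤ (ENNReal.ofReal M)⁻¹ * G x ^ (p₁ x).toReal :=
              mul_le_mul_left (ENNReal.inv_le_inv.2 (hCpow x)) _
    _ = (ENNReal.ofReal M)⁻¹ * ∫⁻ x, G x ^ (p₁ x).toReal :=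
        lintegral_const_mul' _ _ (ENNReal.inv_ne_top.2 (ENNReal.ofReal_pos.2 hM0).ne')
    _ ≤ (ENNReal.ofReal M)⁻¹ * ENNReal.ofReal M := mul_le_mul_right hmain _
    _ = 1 := ENNReal.inv_mul_cancel (ENNReal.ofReal_pos.2 hM0).ne' ENNReal.ofReal_ne_top

end
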